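/- arXiv:2408.14046 — 4 statements merged into one kernel-verified Lean document; each statement's English description precedes it below -/
import Mathlib

section
/- Let q be a prime power, let n_0 ≤ n be positive integers, let g ∈ GL(n_0, F_q), and let χ be an irreducible complex character of GL(n, F_q). Then the algebraic number χ(g) · q^{C(n,2) − C(n−n_0,2)} · ∏_{i=0}^{n_0−1} (q^{n−i} − 1) / χ(1) is an algebraic integer, where C(m,2) = m(m−1)/2. -/
open Matrix

noncomputable def blockOneHom (F : Type*) [Field F] (n₀ n : ℕ) (h : n₀ ≤ n) :
    Matrix (Fin n₀) (Fin n₀) F →* Matrix (Fin n) (Fin n) F :=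
  (Matrix.reindexAlgEquiv F F
      ((finSumFinEquiv (m := n₀) (n := n - n₀)).trans
        (finCongr (Nat.add_sub_cancel' h)))).toAlgHom.toMonoidHom.comp
    { toFun := fun A => Matrix.fromBlocks A 0 0 (1 : Matrix (Fin (n - n₀)) (Fin (n - n₀)) F)
      map_one' := by simp [Matrix.fromBlocks_one]
      map_mul' := fun A B => by
        simp [Matrix.fromBlocks_multiply] }

noncomputable def glEmbed {F : Type*} [Field F] {n₀ n : ℕ} (h : n₀ ≤ n) :
    GL (Fin n₀) F →* GL (Fin n) F :=
  Units.map (blockOneHom F n₀ n h)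

def IsIrrChar (G : Type) [Group G] (f : G → ℂ) : Prop :=
  ∃ V : FDRep ℂ G, CategoryTheory.Simple V ∧ FDRep.character V = f

/-- `d` divides the algebraic number `z`, i.e. `z / d` is an algebraic integer. -/
def NatDvdAlg (d : ℕ) (z : ℂ) : Prop := IsIntegral ℤ (z / (d : ℂ))

open CategoryTheory in
lemma schur_aux {G : Type} [Group G] (V : FDRep ℂ G) [Simple V] (T : V →ₗ[ℂ] V)
    (hT : ∀ g, T ∘ₗ V.ρ g = V.ρ g ∘ₗ T) : ∃ c : ℂ, T = c • LinearMap.id := by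
  let f : V ⟶ V := ⟨InducedCategory.homMk (ModuleCat.ofHom T), fun g ↦ by
    ext x
    exact LinearMap.congr_fun (hT g) x⟩
  obtain ⟨c, hc⟩ := endomorphism_simple_eq_smul_id ℂ f
  refine ⟨c, ?_⟩
  have : f.hom.hom.hom = (c • 𝟙 V : V ⟶ V).hom.hom.hom := by rw [hc]
  exact this

lemma integral_aux {G : Type} [Group G] [Fintype G] [DecidableEq G] (V : FDRep ℂ G)
    [CategoryTheory.Simple V] (S : Finset G) (x : G) (hS : ∀ y, y ∈ S ↔ IsConj x y) :
    IsIntegral ℤ ((S.card : ℂ) * V.character x / V.character 1) := by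
  let T : V →ₗ[ℂ] V := ∑ y ∈ S, V.ρ y
  have hint : IsIntegral ℤ (T : Module.End ℂ V) := by
    let φ : MonoidAlgebra ℤ G →ₐ[ℤ] Module.End ℂ V := MonoidAlgebra.lift ℤ _ G V.ρ
    have h1 : IsIntegral ℤ (∑ y ∈ S, MonoidAlgebra.of ℤ G y) := by
      have : Module.Finite ℤ (MonoidAlgebra ℤ G) := inferInstance
      exact IsIntegral.of_finite _ _
    have h2 := h1.map φ
    have h3 : φ (∑ y ∈ S, MonoidAlgebra.of ℤ G y) = T := by
      simp only [map_sum, φ, MonoidAlgebra.lift_of]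
      rfl
    rwa [h3] at h2
  obtain ⟨c, hc⟩ := schur_aux V T (by
    intro g
    have e : ∀ a b : Module.End ℂ V, a ∘ₗ b = a * b := fun _ _ => rfl
    simp only [T, e]
    erw [Finset.sum_mul, Finset.mul_sum]
    refine Finset.sum_bij' (fun y _ => g⁻¹ * y * g) (fun y _ => g * y * g⁻¹) ?_ ?_ ?_ ?_ ?_
    · intro y hy
      rw [hS] at hy ⊢
      exact hy.trans (isConj_iff.2 ⟨g⁻¹, by group⟩)
    · intro y hy
      rw [hS] at hy ⊢
      exact hy.trans (isConj_iff.2 ⟨g, by group⟩)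
    · intro y _; group
    · intro y _; group
    · intro y _
      rw [← map_mul, ← map_mul]
      congr 1
      group)
  by_cases h0 : V.character 1 = 0
  · rw [h0, div_zero]; exact isIntegral_zero
  have hd := FDRep.char_one V
  have htr : LinearMap.trace ℂ V T = c * V.character 1 := by
    rw [hc, map_smul, LinearMap.trace_id, hd, smul_eq_mul]
  have htr2 : LinearMap.trace ℂ V T = S.card * V.character x := by
    have : ∀ y ∈ S, LinearMap.trace ℂ V (V.ρ y) = V.character x := by
      intro y hy
      obtain ⟨g, rfl⟩ := isConj_iff.1 ((hS y).1 hy)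
      exact FDRep.char_conj V x g
    simp only [T, map_sum]
    rw [Finset.sum_congr rfl this]
    simp
  have hcc : (S.card : ℂ) * V.character x / V.character 1 = c := by
    rw [← htr2, htr]; field_simp
  rw [hcc]
  have hnt : Nontrivial V := by
    by_contra hn
    rw [not_nontrivial_iff_subsingleton] at hn
    apply h0
    rw [hd, Module.finrank_zero_of_subsingleton]; simp
  have hinj : Function.Injective (algebraMap ℂ (Module.End ℂ V)) :=
    (algebraMap ℂ (Module.End ℂ V)).injective
  rw [← isIntegral_algebraMap_iff (R := ℤ) hinj]
  have : algebraMap ℂ (Module.End ℂ V) c = T := by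
    rw [hc]; rfl
  rwa [this]

lemma integral_aux2 {G H : Type} [Group G] [Finite G] [Group H] (V : FDRep ℂ G)
    [CategoryTheory.Simple V] (x : G) (φ : H →* G) (hφ : Function.Injective φ)
    (hc : ∀ h, φ h * x = x * φ h) (m : ℕ) (hm : Nat.card G = Nat.card H * m) :
    IsIntegral ℤ ((m : ℂ) * V.character x / V.character 1) := by
  classical
  have := Fintype.ofFinite G
  have hHf : Finite H := Finite.of_injective φ hφ
  let S : Finset G := Finset.univ.filter (IsConj x)
  have hS := integral_aux V S x (by simp [S])
  have h1 := MulAction.card_orbit_mul_card_stabilizer_eq_card_group (ConjAct G) x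
  have h2 : Fintype.card (MulAction.orbit (ConjAct G) x) = S.card := by
    rw [← Set.toFinset_card]
    congr 1
    ext y
    rw [Set.mem_toFinset, ConjAct.mem_orbit_conjAct, isConj_comm]
    simp only [S, Finset.mem_filter, Finset.mem_univ, true_and]
  let ψ : H →* MulAction.stabilizer (ConjAct G) x :=
    (ConjAct.toConjAct.toMonoidHom.comp φ).codRestrict _ (by
      intro h
      change ConjAct.toConjAct (φ h) • x = x
      rw [ConjAct.toConjAct_smul, hc]; group)
  have hψ : Function.Injective ψ := by
    intro a b hab
    apply hφ
    exact ConjAct.toConjAct.injective (congrArg Subtype.val hab)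
  obtain ⟨k, hk⟩ := Subgroup.card_dvd_of_injective ψ hψ
  have hH : 0 < Nat.card H := Nat.card_pos
  have hmk : m = S.card * k := by
    rw [h2, ← Nat.card_eq_fintype_card, ← Nat.card_eq_fintype_card, hk,
      Nat.card_congr ConjAct.ofConjAct.toEquiv, hm] at h1
    apply Nat.eq_of_mul_eq_mul_left hH
    rw [← h1]; ring
  have : (m : ℂ) * V.character x / V.character 1
      = (k : ℂ) * (S.card * V.character x / V.character 1) := by
    rw [hmk]; push_cast; ring
  rw [this]
  have hk' : IsIntegral ℤ (k : ℂ) := by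
    simpa using isIntegral_algebraMap (R := ℤ) (A := ℂ) (x := (k : ℤ))
  exact hk'.mul hS

lemma card_GL_aux (F : Type) [Field F] [Fintype F] (n : ℕ) :
    Nat.card (GL (Fin n) F) = Fintype.card F ^ (n.choose 2) *
      ∏ i ∈ Finset.range n, (Fintype.card F ^ (n - i) - 1) := by
  rw [Matrix.card_GL_field, Fin.prod_univ_eq_prod_range (fun i => Fintype.card F ^ n -
    Fintype.card F ^ i), show n.choose 2 = ∑ i ∈ Finset.range n, i by
      rw [Finset.sum_range_id, Nat.choose_two_right], ← Finset.prod_pow_eq_pow_sum,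
    ← Finset.prod_mul_distrib]
  refine Finset.prod_congr rfl fun i hi => ?_
  have := Finset.mem_range.1 hi
  rw [Nat.mul_sub, ← pow_add, mul_one]
  congr 2; omega

lemma card_GL_aux2 (F : Type) [Field F] [Fintype F] (n₀ n : ℕ) (h : n₀ ≤ n) :
    Nat.card (GL (Fin n) F) = Nat.card (GL (Fin (n - n₀)) F) *
      (Fintype.card F ^ (n.choose 2 - (n - n₀).choose 2) *
      ∏ i ∈ Finset.range n₀, (Fintype.card F ^ (n - i) - 1)) := by
  rw [card_GL_aux, card_GL_aux]
  have h1 : (n - n₀).choose 2 ≤ n.choose 2 := Nat.choose_le_choose 2 (Nat.sub_le _ _)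
  have h2 : Fintype.card F ^ (n.choose 2) = Fintype.card F ^ ((n - n₀).choose 2) *
      Fintype.card F ^ (n.choose 2 - (n - n₀).choose 2) := by
    rw [← pow_add]; congr 1; omega
  have h3 : ∏ i ∈ Finset.range n, (Fintype.card F ^ (n - i) - 1) =
      (∏ i ∈ Finset.range n₀, (Fintype.card F ^ (n - i) - 1)) *
      ∏ i ∈ Finset.range (n - n₀), (Fintype.card F ^ (n - n₀ - i) - 1) := by
    conv_lhs => rw [show Finset.range n = Finset.range (n₀ + (n - n₀)) by congr 1; omega]
    rw [Finset.prod_range_add]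
    congr 1
    refine Finset.prod_congr rfl fun i _ => ?_
    rw [Nat.sub_sub]
  rw [h2, h3]; ring

noncomputable def blockTwoHom (F : Type*) [Field F] (n₀ n : ℕ) (h : n₀ ≤ n) :
    Matrix (Fin (n - n₀)) (Fin (n - n₀)) F →* Matrix (Fin n) (Fin n) F :=
  (Matrix.reindexAlgEquiv F F
      ((finSumFinEquiv (m := n₀) (n := n - n₀)).trans
        (finCongr (Nat.add_sub_cancel' h)))).toAlgHom.toMonoidHom.comp
    { toFun := fun A => Matrix.fromBlocks (1 : Matrix (Fin n₀) (Fin n₀) F) 0 0 A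
      map_one' := by simp [Matrix.fromBlocks_one]
      map_mul' := fun A B => by
        simp [Matrix.fromBlocks_multiply] }

lemma blockTwoHom_injective (F : Type*) [Field F] (n₀ n : ℕ) (h : n₀ ≤ n) :
    Function.Injective (blockTwoHom F n₀ n h) := by
  intro A B hAB
  have := (Matrix.reindexAlgEquiv F F
      ((finSumFinEquiv (m := n₀) (n := n - n₀)).trans
        (finCongr (Nat.add_sub_cancel' h)))).injective hAB
  exact (Matrix.fromBlocks_inj.1 this).2.2.2

lemma block_comm (F : Type*) [Field F] (n₀ n : ℕ) (h : n₀ ≤ n) (A B) :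
    blockTwoHom F n₀ n h B * blockOneHom F n₀ n h A =
      blockOneHom F n₀ n h A * blockTwoHom F n₀ n h B := by
  let e := (Matrix.reindexAlgEquiv F F
      ((finSumFinEquiv (m := n₀) (n := n - n₀)).trans
        (finCongr (Nat.add_sub_cancel' h))))
  change e (Matrix.fromBlocks 1 0 0 B) * e (Matrix.fromBlocks A 0 0 1) =
    e (Matrix.fromBlocks A 0 0 1) * e (Matrix.fromBlocks 1 0 0 B)
  rw [← map_mul, ← map_mul]
  simp [Matrix.fromBlocks_multiply]

theorem character_value_ratio_is_integral
    (q : ℕ) (hq : IsPrimePow q)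
    (F : Type) [Field F] [Fintype F] (hFq : Fintype.card F = q)
    (n₀ n : ℕ) (hn₀ : 0 < n₀) (h : n₀ ≤ n) (g : GL (Fin n₀) F)
    (χ : GL (Fin n) F → ℂ) (hχ : IsIrrChar _ χ) :
    IsIntegral ℤ
      (χ (glEmbed h g) * (q : ℂ) ^ (n.choose 2 - (n - n₀).choose 2) *
        (∏ i ∈ Finset.range n₀, ((q : ℂ) ^ (n - i) - 1)) / χ 1) := by
  obtain ⟨V, hV, rfl⟩ := hχ
  have key := integral_aux2 V (glEmbed h g) (Units.map (blockTwoHom F n₀ n h))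
    (Units.map_injective (blockTwoHom_injective F n₀ n h))
    (fun k => Units.ext (block_comm F n₀ n h _ _)) _ (card_GL_aux2 F n₀ n h)
  rw [hFq] at key
  have hq1 : 1 ≤ q := hq.pos
  convert key using 1
  push_cast
  rw [Finset.prod_congr rfl (fun i _ => Nat.cast_sub (R := ℂ) (Nat.one_le_pow (n - i) q hq1))]
  push_cast
  ring
end

section
/- Let q be an odd prime power and let λ be a partition of n. Then v_2(d_λ(q)) ≥ v_2(𝔣_λ), where d_λ(q) = q^{α(λ)} · (∏_{i=1}^{n} (q^i − 1)) / (∏_{h ∈ H(λ)} (q^{|h|} − 1)). -/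
/-- The `i`-th part (0-indexed, parts in weakly decreasing order) of the partition whose
multiset of parts is `lam`; `0` if `i` is at least the number of parts. -/
def partNth (lam : Multiset ℕ) (i : ℕ) : ℕ :=
  ((lam.sort (· ≤ ·)).reverse.getD i 0)

/-- The `j`-th part (0-indexed) of the conjugate partition: the number of parts `> j`. -/
def conjNth (lam : Multiset ℕ) (j : ℕ) : ℕ :=
  (lam.filter (fun m => j < m)).card

/-- The cells `(i, j)` (0-indexed) of the Young diagram of `lam`. -/
def cellsOf (lam : Multiset ℕ) : Finset (ℕ × ℕ) :=
  (Finset.range (Multiset.card lam) ×ˢ Finset.range lam.sum).filter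
    (fun c => c.2 < partNth lam c.1)

/-- The hook length of the cell `c = (i, j)` of `lam`:
`(λᵢ − j) + (λ'ⱼ − i) − 1`. -/
def hookLen (lam : Multiset ℕ) (c : ℕ × ℕ) : ℕ :=
  (partNth lam c.1 - c.2) + (conjNth lam c.2 - c.1) - 1

/-- The product of all hook lengths of `lam`. -/
def hookProd (lam : Multiset ℕ) : ℕ :=
  ∏ c ∈ cellsOf lam, hookLen lam c

/-- `α(λ) = Σᵢ (i − 1)·λᵢ` (1-indexed), i.e. `Σᵢ i·λᵢ` for the 0-indexed parts. -/
def alphaStat (lam : Multiset ℕ) : ℕ :=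
  ∑ i ∈ Finset.range (Multiset.card lam), i * partNth lam i

/-- `𝔣_λ = n! / ∏_{h ∈ H(λ)} |h|`, the degree of the irreducible character of `S_n`
indexed by `λ`, as a rational number. -/
def fDeg (lam : Multiset ℕ) : ℚ :=
  (Nat.factorial lam.sum : ℚ) / (hookProd lam : ℚ)

/-- `d_λ(x) = x^{α(λ)} · ∏_{i=1}^{n} (x^i − 1) / ∏_{h ∈ H(λ)} (x^{|h|} − 1)`. -/
def dDeg (lam : Multiset ℕ) (x : ℕ) : ℚ :=
  (x : ℚ) ^ alphaStat lam * (∏ i ∈ Finset.Icc 1 lam.sum, ((x : ℚ) ^ i - 1)) /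
    ∏ c ∈ cellsOf lam, ((x : ℚ) ^ hookLen lam c - 1)

namespace TwoAdic

def cj (L : List ℕ) (j : ℕ) : ℕ := L.countP (fun m => decide (j < m))

def dd : List ℕ → ℤ
  | [] => 0
  | a :: L => (-1) ^ (a + L.length) + dd L

def tt (L : List ℕ) (m : ℕ) : ℤ := ∑ j ∈ Finset.range m, (-1) ^ (j + cj L j)

def pp (L : List ℕ) : ℤ :=
  ∑ i ∈ Finset.range L.length, ∑ j ∈ Finset.range (L.getD i 0),
    (-1) ^ (L.getD i 0 + j + cj L j + i)

lemma sum_alt (m : ℕ) : 2 * ∑ j ∈ Finset.range m, (-1 : ℤ) ^ j = 1 - (-1) ^ m := by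
  induction m with
  | zero => simp
  | succ m ih => rw [Finset.sum_range_succ, mul_add, ih, pow_succ]; ring

lemma cj_zero (L : List ℕ) (j : ℕ) (h : ∀ x ∈ L, x ≤ j) : cj L j = 0 := by
  unfold cj
  rw [List.countP_eq_zero]
  intro x hx
  have := h x hx
  simpa using this

lemma cj_cons (a : ℕ) (L : List ℕ) (j : ℕ) (h : j < a) : cj (a :: L) j = cj L j + 1 := by
  simp [cj, h]

lemma neg_one_cases (k : ℕ) : ((-1 : ℤ) ^ k = 1) ∨ ((-1 : ℤ) ^ k = -1) := neg_one_pow_eq_or ℤ k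

lemma tt_eq (L : List ℕ) : ∀ m, L.Pairwise (· ≥ ·) → (∀ x ∈ L, x ≤ m) →
    2 * tt L m = (-1) ^ L.length * (1 - (-1) ^ (m + L.length) - 2 * dd L) := by
  induction L with
  | nil => intro m _ _; simpa [tt, cj, dd] using sum_alt m
  | cons a L ih =>
    intro m hp hm
    rw [List.pairwise_cons] at hp
    obtain ⟨t, rfl⟩ := Nat.exists_eq_add_of_le (hm a (by simp))
    have ih' := ih a hp.2 hp.1
    have h1 : tt (a :: L) (a + t) = - tt L a + (-1) ^ a * ∑ j ∈ Finset.range t, (-1 : ℤ) ^ j := by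
      unfold tt
      rw [Finset.sum_range_add, ← Finset.sum_neg_distrib, Finset.mul_sum]
      congr 1
      · refine Finset.sum_congr rfl fun j hj => ?_
        rw [cj_cons _ _ _ (Finset.mem_range.1 hj), ← add_assoc, pow_succ]; ring
      · refine Finset.sum_congr rfl fun j hj => ?_
        rw [cj_zero, add_zero, pow_add]
        intro x hx
        rcases List.mem_cons.1 hx with rfl | hx
        · omega
        · have := hp.1 x hx
          omega
    have h2 := sum_alt t
    rw [h1, mul_add, mul_neg, ih', mul_left_comm, h2]
    simp only [dd, List.length_cons, pow_add, pow_one]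
    rcases neg_one_cases a with h | h <;> rcases neg_one_cases t with h' | h' <;>
      rcases neg_one_cases L.length with h'' | h'' <;> rw [h, h', h''] <;> ring

lemma pp_cons (a : ℕ) (L : List ℕ) (hp : ∀ x ∈ L, x ≤ a) :
    pp (a :: L) = pp L - (-1) ^ a * tt L a := by
  unfold pp
  rw [List.length_cons, Finset.sum_range_succ', sub_eq_add_neg]
  congr 1
  · refine Finset.sum_congr rfl fun i hi => ?_
    have hi' := Finset.mem_range.1 hi
    have hle : L.getD i 0 ≤ a := by
      rw [List.getD_eq_getElem _ _ hi']; exact hp _ (List.getElem_mem _)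
    simp only [List.getD_cons_succ]
    refine Finset.sum_congr rfl fun j hj => ?_
    rw [cj_cons _ _ _ (lt_of_lt_of_le (Finset.mem_range.1 hj) hle)]
    simp only [pow_add]; ring
  · simp only [List.getD_cons_zero, tt]
    rw [Finset.mul_sum, ← Finset.sum_neg_distrib]
    refine Finset.sum_congr rfl fun j hj => ?_
    rw [cj_cons _ _ _ (Finset.mem_range.1 hj)]
    simp only [pow_add]; ring

lemma pp_eq (L : List ℕ) (hp : L.Pairwise (· ≥ ·)) : 2 * pp L = dd L ^ 2 - dd L := by
  induction L with
  | nil => simp [pp, dd]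
  | cons a L ih =>
    rw [List.pairwise_cons] at hp
    have h1 := ih hp.2
    have h2 := tt_eq L a hp.2 hp.1
    rw [pp_cons a L hp.1, mul_sub, h1, mul_left_comm, h2]
    simp only [dd, pow_add]
    rcases neg_one_cases a with h | h <;>
      rcases neg_one_cases L.length with h'' | h'' <;> rw [h, h''] <;> ring

lemma pp_nonneg (L : List ℕ) (hp : L.Pairwise (· ≥ ·)) : 0 ≤ pp L := by
  have h := pp_eq L hp
  have : 0 ≤ dd L ^ 2 - dd L := by
    rcases le_or_gt (dd L) 0 with h | h <;> nlinarith
  omega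

lemma lt_cj (L : List ℕ) (hp : L.Pairwise (· ≥ ·)) : ∀ i j, j < L.getD i 0 → i < cj L j := by
  induction L with
  | nil => intro i j h; simp at h
  | cons a L ih =>
    rw [List.pairwise_cons] at hp
    intro i j h
    cases i with
    | zero => rw [cj_cons a L j (by simpa using h)]; omega
    | succ i =>
      rw [List.getD_cons_succ] at h
      have := ih hp.2 i j h
      have hle : L.getD i 0 ≤ a := by
        by_cases hi : i < L.length
        · rw [List.getD_eq_getElem _ _ hi]; exact hp.1 _ (List.getElem_mem _)
        · rw [List.getD_eq_default _ _ (by omega)] at h; omega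
      rw [cj_cons a L j (by omega)]; omega

def pl (lam : Multiset ℕ) : List ℕ := (lam.sort (· ≤ ·)).reverse

lemma pl_pairwise (lam : Multiset ℕ) : (pl lam).Pairwise (· ≥ ·) := by
  unfold pl
  rw [List.pairwise_reverse]
  exact Multiset.pairwise_sort lam (· ≤ ·)

lemma pl_coe (lam : Multiset ℕ) : ((pl lam : List ℕ) : Multiset ℕ) = lam := by
  unfold pl
  rw [Multiset.coe_reverse, Multiset.sort_eq]

lemma pl_length (lam : Multiset ℕ) : (pl lam).length = Multiset.card lam := by
  conv_rhs => rw [← pl_coe lam]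
  simp

lemma pl_sum (lam : Multiset ℕ) : (pl lam).sum = lam.sum := by
  conv_rhs => rw [← pl_coe lam]
  simp

lemma partNth_eq (lam : Multiset ℕ) (i : ℕ) : partNth lam i = (pl lam).getD i 0 := rfl

lemma conjNth_eq (lam : Multiset ℕ) (j : ℕ) : conjNth lam j = cj (pl lam) j := by
  unfold conjNth cj
  rw [← Multiset.countP_eq_card_filter]
  conv_lhs => rw [← pl_coe lam]
  rw [Multiset.coe_countP]

lemma getD_le_sum (L : List ℕ) : ∀ i, L.getD i 0 ≤ L.sum := by
  induction L with
  | nil => simp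
  | cons a L ih =>
    intro i
    cases i with
    | zero => simp
    | succ i => rw [List.getD_cons_succ, List.sum_cons]; have := ih i; omega

lemma sum_getD (L : List ℕ) : ∑ i ∈ Finset.range L.length, L.getD i 0 = L.sum := by
  induction L with
  | nil => simp
  | cons a L ih =>
    rw [List.length_cons, Finset.sum_range_succ']
    simp only [List.getD_cons_succ, List.getD_cons_zero, List.sum_cons, ih]; omega

lemma sum_cells {M : Type*} [AddCommMonoid M] (lam : Multiset ℕ) (f : ℕ × ℕ → M) :
    ∑ c ∈ cellsOf lam, f c = ∑ i ∈ Finset.range (Multiset.card lam),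
      ∑ j ∈ Finset.range (partNth lam i), f (i, j) := by
  unfold cellsOf
  rw [Finset.sum_filter, Finset.sum_product]
  refine Finset.sum_congr rfl fun i _ => ?_
  rw [← Finset.sum_filter]
  refine Finset.sum_congr ?_ fun _ _ => rfl
  ext j
  have := getD_le_sum (pl lam) i
  rw [pl_sum, ← partNth_eq] at this
  simp only [Finset.mem_filter, Finset.mem_range]
  omega

lemma card_cells (lam : Multiset ℕ) : (cellsOf lam).card = lam.sum := by
  rw [Finset.card_eq_sum_ones, sum_cells]
  simp only [Finset.sum_const, Finset.card_range, smul_eq_mul, mul_one, partNth_eq]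
  rw [← pl_length, sum_getD, pl_sum]

lemma hook_aux (lam : Multiset ℕ) (c : ℕ × ℕ) (hc : c ∈ cellsOf lam) :
    0 < hookLen lam c ∧
      hookLen lam c + 1 + c.1 + c.2 = partNth lam c.1 + conjNth lam c.2 := by
  have h : c.2 < partNth lam c.1 := (Finset.mem_filter.1 hc).2
  have h2 := lt_cj (pl lam) (pl_pairwise lam) c.1 c.2 h
  rw [← conjNth_eq] at h2
  unfold hookLen
  omega

lemma sum_hooks (lam : Multiset ℕ) : ∑ c ∈ cellsOf lam, (-1 : ℤ) ^ hookLen lam c ≤ 0 := by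
  have h : ∑ c ∈ cellsOf lam, (-1 : ℤ) ^ hookLen lam c = - pp (pl lam) := by
    have : ∀ c ∈ cellsOf lam, (-1 : ℤ) ^ hookLen lam c
        = - (-1) ^ (partNth lam c.1 + c.2 + conjNth lam c.2 + c.1) := by
      intro c hc
      have h := (hook_aux lam c hc).2
      have e : partNth lam c.1 + c.2 + conjNth lam c.2 + c.1
          = hookLen lam c + 1 + 2 * (c.1 + c.2) := by omega
      rw [e, pow_add, pow_mul, pow_succ]; simp
    rw [Finset.sum_congr rfl this, Finset.sum_neg_distrib, sum_cells]
    simp only [pp, conjNth_eq, partNth_eq, pl_length]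
  have := pp_nonneg (pl lam) (pl_pairwise lam)
  omega

lemma even_hooks (lam : Multiset ℕ) :
    ((cellsOf lam).filter (fun c => Even (hookLen lam c))).card ≤ lam.sum / 2 := by
  have h1 := sum_hooks lam
  have h2 : ∑ c ∈ cellsOf lam, (-1 : ℤ) ^ hookLen lam c
      = ∑ c ∈ cellsOf lam, (2 * (if Even (hookLen lam c) then 1 else 0) - 1 : ℤ) := by
    refine Finset.sum_congr rfl fun c _ => ?_
    rw [neg_one_pow_eq_ite]
    split_ifs <;> norm_num
  rw [h2, Finset.sum_sub_distrib, ← Finset.mul_sum, Finset.sum_boole] at h1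
  simp only [Finset.sum_const, card_cells, nsmul_eq_mul, mul_one] at h1
  omega

lemma prod_Icc_fact (n : ℕ) : ∏ i ∈ Finset.Icc 1 n, i = n.factorial := by
  induction n with
  | zero => simp
  | succ n ih =>
    rw [← Finset.insert_Icc_right_eq_Icc_add_one (by omega), Finset.prod_insert (by simp), ih,
      Nat.factorial_succ]

lemma even_Icc (n : ℕ) :
    ((Finset.Icc 1 n).filter (fun i => Even i)).card = n / 2 := by
  induction n with
  | zero => simp
  | succ n ih =>
    rw [← Finset.insert_Icc_right_eq_Icc_add_one (by omega), Finset.filter_insert]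
    split_ifs with h
    · rw [Finset.card_insert_of_notMem (by simp), ih]; grind
    · rw [ih]; grind

lemma val_pow (q : ℕ) (hq : 1 < q) (hodd : Odd q) (h : ℕ) (h0 : 0 < h) :
    padicValNat 2 (q ^ h - 1) = padicValNat 2 (q - 1) + padicValNat 2 h +
      (padicValNat 2 (q + 1) - 1) * (if Even h then 1 else 0) := by
  have hb : 1 ≤ padicValNat 2 (q + 1) :=
    one_le_padicValNat_of_dvd (by omega) (by have := hodd.add_one; exact this.two_dvd)
  split_ifs with he
  · have := padicValNat.pow_two_sub_one hq (by have := hodd.not_two_dvd_nat; exact this) h0.ne' he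
    omega
  · rw [Nat.not_even_iff_odd] at he
    have h1 : padicValNat 2 h = 0 := padicValNat.eq_zero_of_not_dvd he.not_two_dvd_nat
    have h2 : (∑ i ∈ Finset.range h, q ^ i) * (q - 1) = q ^ h - 1 :=
by
      zify [hq.le, Nat.one_le_pow h q (by omega)]
      exact geom_sum_mul (q : ℤ) h
    have h3 : Odd (∑ i ∈ Finset.range h, q ^ i) := by
      rw [Finset.odd_sum_iff_odd_card_odd, Finset.filter_true_of_mem]
      · simpa using he
      · intro i _; exact hodd.pow
    rw [← h2, padicValNat.mul (by rintro e; rw [e] at h3; simp at h3) (by omega),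
      padicValNat.eq_zero_of_not_dvd h3.not_two_dvd_nat, h1]
    ring

lemma val_prod {ι : Type*} (s : Finset ι) (f : ι → ℕ) (h : ∀ i ∈ s, f i ≠ 0) :
    padicValNat 2 (∏ i ∈ s, f i) = ∑ i ∈ s, padicValNat 2 (f i) := by
  classical
  induction s using Finset.induction_on with
  | empty => simp
  | insert a s ha ih =>
    rw [Finset.prod_insert ha, Finset.sum_insert ha, padicValNat.mul, ih]
    · intro i hi; exact h i (Finset.mem_insert_of_mem hi)
    · exact h a (Finset.mem_insert_self _ _)
    · exact Finset.prod_ne_zero_iff.2 fun i hi => h i (Finset.mem_insert_of_mem hi)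

lemma val_prod_pow {ι : Type*} (s : Finset ι) (f : ι → ℕ) (h : ∀ i ∈ s, 0 < f i)
    (q : ℕ) (hq : 1 < q) (hodd : Odd q) :
    padicValNat 2 (∏ i ∈ s, (q ^ f i - 1)) = s.card * padicValNat 2 (q - 1) +
      padicValNat 2 (∏ i ∈ s, f i) +
      (padicValNat 2 (q + 1) - 1) * (s.filter (fun i => Even (f i))).card := by
  rw [val_prod, val_prod s f (fun i hi => (h i hi).ne'),
    Finset.sum_congr rfl fun i hi => val_pow q hq hodd (f i) (h i hi),
    Finset.sum_add_distrib, Finset.sum_add_distrib, ← Finset.mul_sum, ← Finset.card_filter]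
  · simp
  · intro i hi
    have := Nat.one_lt_pow (h i hi).ne' hq
    omega

lemma cast_prod {ι : Type*} (s : Finset ι) (f : ι → ℕ) (q : ℕ) (hq : 1 < q) :
    ∏ i ∈ s, ((q : ℚ) ^ f i - 1) = ((∏ i ∈ s, (q ^ f i - 1) : ℕ) : ℚ) := by
  rw [Nat.cast_prod]
  refine Finset.prod_congr rfl fun i _ => ?_
  rw [Nat.cast_sub (Nat.one_le_pow _ _ (by omega))]; simp

lemma prod_pow_ne {ι : Type*} (s : Finset ι) (f : ι → ℕ) (h : ∀ i ∈ s, 0 < f i)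
    (q : ℕ) (hq : 1 < q) : ((∏ i ∈ s, (q ^ f i - 1) : ℕ) : ℚ) ≠ 0 := by
  rw [Nat.cast_ne_zero, Finset.prod_ne_zero_iff]
  intro i hi
  have := Nat.one_lt_pow (h i hi).ne' hq
  omega

end TwoAdic

open TwoAdic in
theorem two_adic_valuation_ge
    (q : ℕ) (hq : IsPrimePow q) (hodd : Odd q)
    (n : ℕ) (lam : n.Partition) :
    padicValRat 2 (fDeg lam.parts) ≤ padicValRat 2 (dDeg lam.parts q) := by
  have hq1 : 1 < q := hq.one_lt
  generalize lam.parts = l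
  have hI : ∀ i ∈ Finset.Icc 1 l.sum, 0 < i := fun i hi => (Finset.mem_Icc.1 hi).1
  have hH : ∀ c ∈ cellsOf l, 0 < hookLen l c := fun c hc => (hook_aux l c hc).1
  have v1 := val_prod_pow (Finset.Icc 1 l.sum) (fun i => i) hI q hq1 hodd
  have v2 := val_prod_pow (cellsOf l) (hookLen l) hH q hq1 hodd
  have n1 := prod_pow_ne (Finset.Icc 1 l.sum) (fun i => i) hI q hq1
  have n2 := prod_pow_ne (cellsOf l) (hookLen l) hH q hq1
  have c1 := cast_prod (Finset.Icc 1 l.sum) (fun i => i) q hq1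
  have c2 := cast_prod (cellsOf l) (hookLen l) q hq1
  have hqv : padicValNat 2 q = 0 := padicValNat.eq_zero_of_not_dvd hodd.not_two_dvd_nat
  have hp0 : (hookProd l : ℚ) ≠ 0 := by
    rw [Nat.cast_ne_zero]
    exact Finset.prod_ne_zero_iff.2 fun c hc => (hH c hc).ne'
  have hqq : (q : ℚ) ^ alphaStat l ≠ 0 := pow_ne_zero _ (by exact_mod_cast (by omega : q ≠ 0))
  unfold fDeg dDeg
  rw [c1, c2, padicValRat.div (mul_ne_zero hqq n1) n2, padicValRat.mul hqq n1, padicValRat.pow,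
    padicValRat.div (by exact_mod_cast Nat.factorial_ne_zero _) hp0]
  simp only [padicValRat.of_nat]
  rw [v1, v2, hqv, even_Icc, prod_Icc_fact, card_cells, Nat.card_Icc]
  have key := Nat.mul_le_mul_left (padicValNat 2 (q + 1) - 1) (even_hooks l)
  unfold hookProd
  simp only [Nat.add_sub_cancel]
  generalize padicValNat 2 (q + 1) - 1 = B at *
  generalize B * (l.sum / 2) = X at *
  generalize B * (Finset.card _) = Y at *
  generalize l.sum * padicValNat 2 (q - 1) = Z at *
  push_cast
  omega
end

section
/- Let q be an odd prime power, n a positive integer, and μ ∈ 𝔛_n. Then v_2(a_μ) ≥ v_2( n! / ∏_{f ∈ Φ} |μ(f)|! ), where a_μ = (∏_{i=1}^{n} (q^i − 1)) / (∏_{f ∈ Φ} ∏_{i=1}^{|μ(f)|} (q^{d(f)·i} − 1)). -/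
/-- `μ` is a member of `𝔛_n`: a finitely supported assignment of a partition (given by its
multiset of positive parts) to each monic irreducible polynomial `f ≠ x` over `F`, such that
`Σ_f |μ(f)|·deg f = n`. -/
def IsXn (F : Type*) [Field F] (n : ℕ) (μ : Polynomial F →₀ Multiset ℕ) : Prop :=
  (∀ f ∈ μ.support, f.Monic ∧ Irreducible f ∧ f ≠ Polynomial.X) ∧
  (∀ f : Polynomial F, ∀ m ∈ μ f, 0 < m) ∧
  (μ.sum fun f lam => lam.sum * f.natDegree) = n

/-- `a_μ = ∏_{i=1}^{n} (q^i − 1) / ∏_{f ∈ Φ} ∏_{i=1}^{|μ(f)|} (q^{d(f)·i} − 1)`. -/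
noncomputable def aMu (q : ℕ) {F : Type*} [Field F] (n : ℕ)
    (μ : Polynomial F →₀ Multiset ℕ) : ℚ :=
  (∏ i ∈ Finset.Icc 1 n, ((q : ℚ) ^ i - 1)) /
    ∏ f ∈ μ.support, ∏ i ∈ Finset.Icc 1 (μ f).sum, ((q : ℚ) ^ (f.natDegree * i) - 1)

/-- `ψ_m(x) = ∏_{i=1}^{m} (x^i − 1)`. -/
def psiPoly (m : ℕ) (x : ℚ) : ℚ := ∏ i ∈ Finset.Icc 1 m, (x ^ i - 1)

/-- `H(λ, x) = x^{α(λ)} / ∏_{h ∈ H(λ)} (x^{|h|} − 1)`. -/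
def hFactor (lam : Multiset ℕ) (x : ℚ) : ℚ :=
  x ^ alphaStat lam / ∏ c ∈ cellsOf lam, (x ^ hookLen lam c - 1)

/-- `d_μ = ψ_n(q) · ∏_{f ∈ Φ} H(μ(f), q^{d(f)})`, the degree of the irreducible character of
`GL(n, q)` indexed by `μ`, as a rational number. -/
noncomputable def dMu (q : ℕ) {F : Type*} [Field F] (n : ℕ)
    (μ : Polynomial F →₀ Multiset ℕ) : ℚ :=
  psiPoly n (q : ℚ) * ∏ f ∈ μ.support, hFactor (μ f) ((q : ℚ) ^ f.natDegree)

/-- two-adic valuation of q^i - 1 -/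
lemma val_aux (q : ℕ) (hq : 1 < q) (hodd : Odd q) (i : ℕ) (hi : 0 < i) :
    padicValNat 2 (q ^ i - 1) = padicValNat 2 i + padicValNat 2 (q - 1) +
      (padicValNat 2 (q + 1) - 1) * (if Even i then 1 else 0) := by
  have h2 : 2 ∣ q - 1 := (Nat.Odd.sub_odd hodd odd_one).two_dvd
  have h2q : ¬ 2 ∣ q := by
    rw [← even_iff_two_dvd]; exact Nat.not_even_iff_odd.mpr hodd
  have hb : 1 ≤ padicValNat 2 (q + 1) :=
    one_le_padicValNat_of_dvd (by omega) (hodd.add_one).two_dvd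
  split_ifs with he
  · have h := padicValNat.pow_two_sub_pow (x := q) (y := 1) hq (by simpa using h2) h2q
      hi.ne' he
    rw [one_pow] at h
    omega
  · have hn : ¬ 2 ∣ i := by rwa [← even_iff_two_dvd]
    rw [padicValNat.eq_zero_of_not_dvd hn]
    have hpos : 1 < q ^ i := Nat.one_lt_pow hi.ne' hq
    have h := emultiplicity_pow_sub_pow_of_prime (R := ℤ) (p := 2) Int.prime_two
      (x := q) (y := 1) (by omega) (by omega) (n := i) (by omega)
    rw [one_pow] at h
    have e1 : ((q : ℤ) ^ i - 1) = ((q ^ i - 1 : ℕ) : ℤ) := by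
      rw [Nat.cast_sub hpos.le]; push_cast; rfl
    have e2 : ((q : ℤ) - 1) = ((q - 1 : ℕ) : ℤ) := by
      rw [Nat.cast_sub hq.le]; push_cast; rfl
    rw [e1, e2, show (2 : ℤ) = ((2 : ℕ) : ℤ) from rfl, Int.natCast_emultiplicity,
      Int.natCast_emultiplicity, ← padicValNat_eq_emultiplicity (by omega),
      ← padicValNat_eq_emultiplicity (by omega)] at h
    have h' : padicValNat 2 (q ^ i - 1) = padicValNat 2 (q - 1) := by exact_mod_cast h
    omega

lemma sum_eq_aux (q : ℕ) (hq : 1 < q) (hodd : Odd q) (n : ℕ) :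
    ∑ i ∈ Finset.Icc 1 n, padicValNat 2 (q ^ i - 1) = padicValNat 2 n.factorial +
      padicValNat 2 (q - 1) * n + (padicValNat 2 (q + 1) - 1) * (n / 2) := by
  induction n with
  | zero => simp
  | succ m ih =>
    rw [Finset.sum_Icc_succ_top (by omega), ih, val_aux q hq hodd _ (by omega),
      Nat.factorial_succ, padicValNat.mul (by omega) (Nat.factorial_ne_zero m)]
    have : (m + 1) / 2 = m / 2 + if Even (m + 1) then 1 else 0 := by
      split_ifs with h
      · rw [Nat.even_iff] at h; omega
      · rw [Nat.even_iff] at h; omega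
    rw [this]; ring

lemma sum_le_aux (q : ℕ) (hq : 1 < q) (hodd : Odd q) (d : ℕ) (hd : 0 < d) (m : ℕ) :
    ∑ i ∈ Finset.Icc 1 m, padicValNat 2 (q ^ (d * i) - 1) ≤ padicValNat 2 m.factorial +
      padicValNat 2 (q - 1) * (m * d) + (padicValNat 2 (q + 1) - 1) * (m * d / 2) := by
  induction m with
  | zero => simp
  | succ m ih =>
    rw [Finset.sum_Icc_succ_top (by omega), val_aux q hq hodd _ (by positivity),
      Nat.factorial_succ, padicValNat.mul (by omega) (Nat.factorial_ne_zero m),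
      padicValNat.mul (by omega) (by omega)]
    have h2 : 2 ∣ q - 1 := (Nat.Odd.sub_odd hodd odd_one).two_dvd
    have ha : 1 ≤ padicValNat 2 (q - 1) := one_le_padicValNat_of_dvd (by omega) h2
    have hv : padicValNat 2 d + 1 ≤ d := by
      have h1 : 2 ^ padicValNat 2 d ≤ d := Nat.le_of_dvd hd pow_padicValNat_dvd
      have h3 : padicValNat 2 d < 2 ^ padicValNat 2 d := Nat.lt_two_pow_self
      omega
    have h3 : (if Even (d * (m + 1)) then 1 else 0) + m * d / 2 ≤ (m + 1) * d / 2 := by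
      have e : (m + 1) * d = m * d + d := by ring
      have e' : d * (m + 1) = m * d + d := by ring
      rw [e, e']
      split_ifs with h
      · rw [Nat.even_iff] at h; omega
      · omega
    have h4 := Nat.mul_le_mul_left (padicValNat 2 (q + 1) - 1) h3
    rw [mul_add] at h4
    have h5 : padicValNat 2 d + padicValNat 2 (q - 1) ≤ padicValNat 2 (q - 1) * d := by
      nlinarith
    have h6 : padicValNat 2 (q - 1) * ((m + 1) * d) =
      padicValNat 2 (q - 1) * (m * d) + padicValNat 2 (q - 1) * d := by ring
    omega

lemma padicValNat_prod_aux {ι : Type*} (s : Finset ι) (g : ι → ℕ) (h : ∀ i ∈ s, g i ≠ 0) :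
    padicValNat 2 (∏ i ∈ s, g i) = ∑ i ∈ s, padicValNat 2 (g i) := by
  classical
  induction s using Finset.induction_on with
  | empty => simp
  | insert a s ha ih =>
    rw [Finset.prod_insert ha, Finset.sum_insert ha, padicValNat.mul
      (h a (by simp)) (Finset.prod_ne_zero_iff.mpr fun i hi => h i (by simp [hi])),
      ih fun i hi => h i (by simp [hi])]

theorem two_adic_valuation_of_aMu
    (q : ℕ) (hq : IsPrimePow q) (hodd : Odd q)
    (F : Type*) [Field F] [Fintype F] (hFq : Fintype.card F = q)
    (n : ℕ) (hn : 0 < n) (μ : Polynomial F →₀ Multiset ℕ) (hμ : IsXn F n μ) :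
    padicValRat 2
        ((Nat.factorial n : ℚ) / ∏ f ∈ μ.support, (Nat.factorial (μ f).sum : ℚ)) ≤
      padicValRat 2 (aMu q n μ) := by
  have hq1 : 1 < q := hq.one_lt
  have hd : ∀ f ∈ μ.support, 0 < f.natDegree := fun f hf => (hμ.1 f hf).2.1.natDegree_pos
  have hcast : ∀ k, ((q : ℚ) ^ k - 1) = ((q ^ k - 1 : ℕ) : ℚ) := fun k => by
    rw [Nat.cast_sub (Nat.one_le_pow _ _ (by omega))]; push_cast; rfl
  have hne : ∀ k, 0 < k → q ^ k - 1 ≠ 0 := fun k hk => by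
    have := Nat.one_lt_pow hk.ne' hq1
    omega
  have hN : ∏ i ∈ Finset.Icc 1 n, (q ^ i - 1) ≠ 0 :=
    Finset.prod_ne_zero_iff.mpr fun i hi => hne i (Finset.mem_Icc.mp hi).1
  have hD' : ∀ f ∈ μ.support, ∀ i ∈ Finset.Icc 1 (μ f).sum, q ^ (f.natDegree * i) - 1 ≠ 0 :=
    fun f hf i hi => hne _ (Nat.mul_pos (hd f hf) (Finset.mem_Icc.mp hi).1)
  have hD : ∀ f ∈ μ.support, ∏ i ∈ Finset.Icc 1 (μ f).sum, (q ^ (f.natDegree * i) - 1) ≠ 0 :=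
    fun f hf => Finset.prod_ne_zero_iff.mpr (hD' f hf)
  have hF : ∀ f ∈ μ.support, ((μ f).sum).factorial ≠ 0 := fun f _ => Nat.factorial_ne_zero _
  unfold aMu
  simp only [hcast]
  simp only [← Nat.cast_prod]
  rw [padicValRat.div (by exact_mod_cast Nat.factorial_ne_zero n)
      (by exact_mod_cast Finset.prod_ne_zero_iff.mpr hF),
    padicValRat.div (by exact_mod_cast hN)
      (by exact_mod_cast Finset.prod_ne_zero_iff.mpr hD)]
  simp only [padicValRat.of_nat]
  rw [padicValNat_prod_aux _ _ hF, padicValNat_prod_aux _ _ hD, padicValNat_prod_aux _ _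
    (fun i hi => hne i (Finset.mem_Icc.mp hi).1), sum_eq_aux q hq1 hodd]
  have hsum : ∑ f ∈ μ.support, (μ f).sum * f.natDegree = n := hμ.2.2
  have hhalf : ∑ f ∈ μ.support, ((μ f).sum * f.natDegree / 2) ≤ n / 2 := by
    rw [Nat.le_div_iff_mul_le (by norm_num), Finset.sum_mul, ← hsum]
    exact Finset.sum_le_sum fun f _ => Nat.div_mul_le_self _ _
  have key : ∑ f ∈ μ.support,
      padicValNat 2 (∏ i ∈ Finset.Icc 1 (μ f).sum, (q ^ (f.natDegree * i) - 1)) ≤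
      ∑ f ∈ μ.support, padicValNat 2 ((μ f).sum).factorial + padicValNat 2 (q - 1) * n +
        (padicValNat 2 (q + 1) - 1) * (n / 2) := by
    calc _ ≤ ∑ f ∈ μ.support, (padicValNat 2 ((μ f).sum).factorial +
          padicValNat 2 (q - 1) * ((μ f).sum * f.natDegree) +
          (padicValNat 2 (q + 1) - 1) * ((μ f).sum * f.natDegree / 2)) := by
            refine Finset.sum_le_sum fun f hf => ?_
            rw [padicValNat_prod_aux _ _ (hD' f hf)]
            exact sum_le_aux q hq1 hodd _ (hd f hf) _
      _ ≤ _ := by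
        rw [Finset.sum_add_distrib, Finset.sum_add_distrib, ← Finset.mul_sum,
          ← Finset.mul_sum, hsum]
        exact Nat.add_le_add_left (Nat.mul_le_mul_left _ hhalf) _
  omega
end

section
/- Let q be an odd prime power, n a positive integer, and μ ∈ 𝔛_n. Then v_2(d_μ) ≥ v_2( n! / ∏_{f ∈ Φ} |μ(f)|! ) + Σ_{f ∈ Φ} v_2(𝔣_{μ(f)}). -/
lemma aux_conj (L : List ℕ) (hL : L.Pairwise (· ≥ ·)) (i j : ℕ) :
    i < L.countP (fun m => j < m) ↔ j < L.getD i 0 := by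
  induction L generalizing i with
  | nil => simp
  | cons a l ih =>
    rw [List.pairwise_cons] at hL
    have ih := ih hL.2
    by_cases h : j < a
    · cases i with
      | zero => simp [h]
      | succ i => simpa [h] using ih i
    · have h0 : l.countP (fun m => j < m) = 0 := by
        rw [List.countP_eq_zero]
        intro x hx
        have := hL.1 x hx
        simp; omega
      rw [h0] at ih
      cases i with
      | zero => simp [h, h0]
      | succ i => simpa [h, h0] using ih i

lemma lt_conj_iff (lam : Multiset ℕ) (i j : ℕ) :
    i < conjNth lam j ↔ j < partNth lam i := by
  have h := aux_conj (lam.sort (· ≤ ·)).reverse (by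
    rw [List.pairwise_reverse]
    exact (Multiset.pairwise_sort lam (· ≤ ·))) i j
  unfold partNth conjNth
  rw [← h, List.countP_reverse, ← Multiset.countP_eq_card_filter]
  conv_lhs => rw [← Multiset.sort_eq lam (· ≤ ·)]
  rw [Multiset.coe_countP]

lemma sum_partNth (lam : Multiset ℕ) :
    ∑ i ∈ Finset.range (Multiset.card lam), partNth lam i = lam.sum := by
  have hl : (lam.sort (· ≤ ·)).reverse.length = Multiset.card lam := by simp
  have hs : (lam.sort (· ≤ ·)).reverse.sum = lam.sum := by
    rw [List.sum_reverse]
    conv_rhs => rw [← Multiset.sort_eq lam (· ≤ ·)]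
    rw [Multiset.sum_coe]
  unfold partNth
  rw [← hl, ← hs]
  generalize (lam.sort (· ≤ ·)).reverse = L
  clear hl hs
  induction L with
  | nil => simp
  | cons a l ih => simp [Finset.sum_range_succ', add_comm, ← ih]

lemma sum_cells (lam : Multiset ℕ) (g : ℕ × ℕ → ℕ) :
    ∑ c ∈ cellsOf lam, g c =
      ∑ i ∈ Finset.range (Multiset.card lam), ∑ j ∈ Finset.range (partNth lam i), g (i, j) := by
  unfold cellsOf
  rw [Finset.sum_filter, Finset.sum_product]
  refine Finset.sum_congr rfl fun i hi => ?_
  have hle : partNth lam i ≤ lam.sum := by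
    rw [← sum_partNth]
    exact Finset.single_le_sum (f := partNth lam) (fun _ _ => Nat.zero_le _) hi
  rw [← Finset.sum_filter]
  congr 1
  ext j
  simp only [Finset.mem_filter, Finset.mem_range]
  omega

/-- sum over pairs -/
lemma pair_ineq (s : ℕ → ℕ) (k : ℕ) :
    ((∑ j ∈ Finset.range k, (1 - 2 * ((s j % 2 : ℕ) : ℤ))) ^ 2
        - ∑ j ∈ Finset.range k, (1 - 2 * ((s j % 2 : ℕ) : ℤ))) +
      2 * ∑ j ∈ Finset.range k, ((j : ℤ) - ((s j % 2 : ℕ) : ℤ)) =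
    4 * ∑ j ∈ Finset.range k, ∑ i ∈ Finset.range j, (if s i % 2 = s j % 2 then (1 : ℤ) else 0) := by
  induction k with
  | zero => simp
  | succ k ih =>
    simp only [Finset.sum_range_succ]
    have key : ∑ i ∈ Finset.range k, (if s i % 2 = s k % 2 then (2 : ℤ) else 0)
        = k + (1 - 2 * ((s k % 2 : ℕ) : ℤ)) * ∑ j ∈ Finset.range k, (1 - 2 * ((s j % 2 : ℕ) : ℤ)) := by
      have : (k : ℤ) = ∑ i ∈ Finset.range k, (1 : ℤ) := by simp
      rw [this, Finset.mul_sum, ← Finset.sum_add_distrib]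
      refine Finset.sum_congr rfl fun i _ => ?_
      rcases Nat.mod_two_eq_zero_or_one (s i) with h | h <;>
      rcases Nat.mod_two_eq_zero_or_one (s k) with h' | h' <;> simp [h, h']
    have key2 : ∑ i ∈ Finset.range k, (if s i % 2 = s k % 2 then (2 : ℤ) else 0)
       = 2 * ∑ i ∈ Finset.range k, (if s i % 2 = s k % 2 then (1 : ℤ) else 0) := by
      rw [Finset.mul_sum]
      refine Finset.sum_congr rfl fun i _ => ?_
      split_ifs <;> simp
    rw [key2] at key
    rcases Nat.mod_two_eq_zero_or_one (s k) with h' | h' <;> simp only [h'] at key ⊢ <;> push_cast at key ih ⊢ <;> linear_combination ih - 2 * key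

lemma card_even_Icc (n : ℕ) : ∑ i ∈ Finset.Icc 1 n, (if Even i then 1 else 0) = n / 2 := by
  induction n with
  | zero => simp
  | succ n ih =>
    rw [Finset.sum_Icc_succ_top (by omega), ih]
    split_ifs with h
    · rw [Nat.even_iff] at h; omega
    · rw [Nat.even_iff] at h; omega

lemma row_ineq (p c : ℕ → ℕ) (h : ∀ i j, i < c j ↔ j < p i) (k i : ℕ) (hi : i < k)
    (hc : ∀ j, c j ≤ k) :
    (∑ j ∈ Finset.range (p i), (if Even (p i - j + (c j - i) - 1) then 1 else 0))
      + ∑ j ∈ Finset.Ioo i k, (if (p i + (k - 1 - i)) % 2 = (p j + (k - 1 - j)) % 2 then 1 else 0)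
      ≤ (p i + (k - 1 - i)) / 2 := by
  rw [← card_even_Icc, ← Finset.card_filter, ← Finset.card_filter, ← Finset.card_filter]
  have hp : ∀ i i', i ≤ i' → p i' ≤ p i := by
    intro a b hab
    by_contra! hlt
    have := (h b (p a)).2 hlt
    have := (h a (p a)).1 (by omega)
    omega
  have hcc : ∀ i i', i ≤ i' → c i' ≤ c i := by
    intro a b hab
    by_contra! hlt
    have := (h (c a) b).1 hlt
    have := (h (c a) a).2 (by omega)
    omega
  set A := (Finset.range (p i)).filter (fun j => Even (p i - j + (c j - i) - 1))
  set B := (Finset.Ioo i k).filter (fun j => (p i + (k - 1 - i)) % 2 = (p j + (k - 1 - j)) % 2)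
  have hA : (A.image (fun j => p i - j + (c j - i) - 1)).card = A.card := by
    apply Finset.card_image_of_injOn
    intro x hx y hy hxy
    simp only [A, Finset.coe_filter, Finset.mem_range, Set.mem_ofPred_eq] at hx hy
    have h1 := (h i x).2 hx.1
    have h2 := (h i y).2 hy.1
    dsimp only at hxy
    rcases lt_trichotomy x y with hh | hh | hh
    · have := hcc x y hh.le; omega
    · exact hh
    · have := hcc y x hh.le; omega
  have hB : (B.image (fun j => p i + j - i - p j)).card = B.card := by
    apply Finset.card_image_of_injOn
    intro x hx y hy hxy
    simp only [B, Finset.coe_filter, Finset.mem_Ioo, Set.mem_ofPred_eq] at hx hy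
    have h1 := hp i x (by omega)
    have h2 := hp i y (by omega)
    dsimp only at hxy
    rcases lt_trichotomy x y with hh | hh | hh
    · have := hp x y hh.le; omega
    · exact hh
    · have := hp y x hh.le; omega
  rw [← hA, ← hB, ← Finset.card_union_of_disjoint]
  · apply Finset.card_le_card
    intro x hx
    rw [Finset.mem_union, Finset.mem_image, Finset.mem_image] at hx
    rw [Finset.mem_filter, Finset.mem_Icc]
    rcases hx with ⟨j, hj, rfl⟩ | ⟨j, hj, rfl⟩
    · simp only [A, Finset.mem_filter, Finset.mem_range] at hj
      have := (h i j).2 hj.1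
      have := hc j
      refine ⟨⟨?_, ?_⟩, hj.2⟩ <;> omega
    · simp only [B, Finset.mem_filter, Finset.mem_Ioo] at hj
      have h1 := hp i j (by omega)
      rw [Nat.even_iff]
      refine ⟨⟨?_, ?_⟩, ?_⟩ <;> omega
  · rw [Finset.disjoint_left]
    intro x hx hx'
    rw [Finset.mem_image] at hx hx'
    obtain ⟨j, hj, rfl⟩ := hx
    obtain ⟨j', hj', he⟩ := hx'
    simp only [A, Finset.mem_filter, Finset.mem_range] at hj
    simp only [B, Finset.mem_filter, Finset.mem_Ioo] at hj'
    have h1 := (h i j).2 hj.1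
    have h2 := hp i j' (by omega)
    have h3 := h j' j
    by_cases h4 : j < p j'
    · have := h3.2 h4; omega
    · have : ¬ j' < c j := fun h5 => h4 (h3.1 h5)
      omega

lemma even_hooks (lam : Multiset ℕ) :
    2 * ∑ c ∈ cellsOf lam, (if Even (hookLen lam c) then 1 else 0) ≤ lam.sum := by
  rw [sum_cells]
  set k := Multiset.card lam with hk
  set p := partNth lam
  set b : ℕ → ℕ := fun i => p i + (k - 1 - i) with hb
  have hrow : ∀ i ∈ Finset.range k,
      (∑ j ∈ Finset.range (p i), (if Even (hookLen lam (i, j)) then 1 else 0))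
      + ∑ j ∈ Finset.Ioo i k, (if b i % 2 = b j % 2 then 1 else 0)
      ≤ b i / 2 := by
    intro i hi
    exact row_ineq p (conjNth lam) (lt_conj_iff lam) k i (Finset.mem_range.1 hi)
      (fun j => Multiset.card_le_card (Multiset.filter_le _ _))
  have hsum := Finset.sum_le_sum hrow
  rw [Finset.sum_add_distrib] at hsum
  have hswap : ∑ i ∈ Finset.range k, ∑ j ∈ Finset.Ioo i k, (if b i % 2 = b j % 2 then 1 else 0)
      = ∑ j ∈ Finset.range k, ∑ i ∈ Finset.range j, (if b i % 2 = b j % 2 then 1 else 0) := by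
    apply Finset.sum_comm'
    intro x y
    simp only [Finset.mem_range, Finset.mem_Ioo]
    omega
  rw [hswap] at hsum
  have hpair := pair_ineq b k
  have hsq : ∀ S : ℤ, 0 ≤ S ^ 2 - S := by
    intro S
    rcases le_or_gt S 0 with h | h <;> nlinarith
  have hS := hsq (∑ j ∈ Finset.range k, (1 - 2 * ((b j % 2 : ℕ) : ℤ)))
  have hbs : ∑ i ∈ Finset.range k, b i = lam.sum + ∑ i ∈ Finset.range k, i := by
    rw [hb, Finset.sum_add_distrib, sum_partNth, Finset.sum_range_reflect (fun i => i) k]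
  have hdm : ∑ i ∈ Finset.range k, b i =
      2 * ∑ i ∈ Finset.range k, b i / 2 + ∑ i ∈ Finset.range k, b i % 2 := by
    rw [Finset.mul_sum, ← Finset.sum_add_distrib]
    exact Finset.sum_congr rfl fun i _ => (Nat.div_add_mod _ _).symm
  rw [Finset.sum_sub_distrib (f := fun j : ℕ => (j : ℤ))] at hpair
  have hc : ∑ j ∈ Finset.range k, ∑ i ∈ Finset.range j, (if b i % 2 = b j % 2 then (1 : ℤ) else 0)
      = ((∑ j ∈ Finset.range k, ∑ i ∈ Finset.range j, (if b i % 2 = b j % 2 then 1 else 0) : ℕ) : ℤ) := by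
    push_cast [Nat.cast_ite]
    simp only [← Int.natCast_mod, ← Nat.cast_ofNat (R := ℤ) (n := 2), Nat.cast_inj]
  rw [hc] at hpair
  generalize (∑ j ∈ Finset.range k, ∑ i ∈ Finset.range j, (if b i % 2 = b j % 2 then 1 else 0) : ℕ)
    = T at hpair hsum
  zify at hsum hbs hdm ⊢
  push_cast at hpair hS
  linarith

lemma card_cells (lam : Multiset ℕ) : (cellsOf lam).card = lam.sum := by
  rw [Finset.card_eq_sum_ones, sum_cells]
  simp [sum_partNth]

lemma hookLen_pos (lam : Multiset ℕ) (c : ℕ × ℕ) (hc : c ∈ cellsOf lam) : 0 < hookLen lam c := by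
  have h : c.2 < partNth lam c.1 := (Finset.mem_filter.1 hc).2
  have := (lt_conj_iff lam c.1 c.2).2 h
  unfold hookLen
  omega

lemma val_pow (q : ℕ) (hodd : Odd q) (hq : 1 < q) (i : ℕ) (hi : 0 < i) :
    padicValRat 2 ((q : ℚ) ^ i - 1) = (padicValNat 2 (q - 1) : ℤ) + padicValRat 2 (i : ℚ)
      + ((padicValNat 2 (q + 1) : ℤ) - 1) * (if Even i then 1 else 0) := by
  have hcast : ((q : ℚ) ^ i - 1) = ((q ^ i - 1 : ℕ) : ℚ) := by
    rw [Nat.cast_sub (Nat.one_le_pow _ _ (by omega))]; push_cast; rfl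
  rw [hcast, padicValRat.of_nat, padicValRat.of_nat]
  have h2 : ¬ 2 ∣ q := by rw [← even_iff_two_dvd]; exact Nat.not_even_iff_odd.2 hodd
  split_ifs with he
  · have := padicValNat.pow_two_sub_pow (x := q) (y := 1) hq (by omega) h2 hi.ne' he
    rw [one_pow] at this
    omega
  · have hg : (q ^ i - 1 : ℕ) = (q - 1) * ∑ j ∈ Finset.range i, q ^ j := by
      have := Nat.geomSum_eq (m := q) hq i
      have hd : q - 1 ∣ q ^ i - 1 := by simpa using Nat.sub_dvd_pow_sub_pow q 1 i
      rw [this, Nat.mul_div_cancel' hd]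
    have ho : ¬ 2 ∣ ∑ j ∈ Finset.range i, q ^ j := by
      rw [← even_iff_two_dvd, Nat.not_even_iff_odd, Finset.odd_sum_iff_odd_card_odd]
      rw [Finset.filter_true_of_mem (fun j _ => hodd.pow)]
      simpa using he
    have hi2 : ¬ 2 ∣ i := by rwa [← even_iff_two_dvd]
    rw [hg, padicValNat.mul (by omega) (by rintro h; rw [h] at ho; simp at ho),
      padicValNat.eq_zero_of_not_dvd ho, padicValNat.eq_zero_of_not_dvd hi2]
    simp

lemma val_prod {ι : Type*} (s : Finset ι) (g : ι → ℚ) (h : ∀ i ∈ s, g i ≠ 0) :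
    padicValRat 2 (∏ i ∈ s, g i) = ∑ i ∈ s, padicValRat 2 (g i) := by
  classical
  induction s using Finset.induction_on with
  | empty => simp
  | insert a s ha ih =>
    rw [Finset.prod_insert ha, Finset.sum_insert ha, padicValRat.mul (h a (by simp))
      (Finset.prod_ne_zero_iff.2 fun i hi => h i (by simp [hi])), ih fun i hi => h i (by simp [hi])]

lemma pow_sub_ne (q : ℕ) (hq : 1 < q) (i : ℕ) (hi : 0 < i) : (q : ℚ) ^ i - 1 ≠ 0 := by
  have : (1 : ℚ) < (q : ℚ) ^ i := one_lt_pow₀ (by exact_mod_cast hq) hi.ne'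
  linarith

lemma val_psi (q : ℕ) (hodd : Odd q) (hq : 1 < q) (n : ℕ) :
    padicValRat 2 (psiPoly n (q : ℚ)) = n * (padicValNat 2 (q - 1) : ℤ)
      + padicValRat 2 (n.factorial : ℚ) + ((padicValNat 2 (q + 1) : ℤ) - 1) * (n / 2 : ℕ) := by
  unfold psiPoly
  have hfac : ∏ x ∈ Finset.Icc 1 n, x = n.factorial := by
    rw [← Finset.prod_Ico_id_eq_factorial]
    congr 1
  rw [val_prod _ _ (fun i hi => pow_sub_ne q hq i (Finset.mem_Icc.1 hi).1)]
  rw [Finset.sum_congr rfl (fun i hi => val_pow q hodd hq i (Finset.mem_Icc.1 hi).1)]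
  rw [Finset.sum_add_distrib, Finset.sum_add_distrib, ← Finset.mul_sum, ← card_even_Icc,
    ← hfac, Nat.cast_prod, val_prod]
  · simp
  · intro i hi
    have := (Finset.mem_Icc.1 hi).1
    positivity

lemma val_hFactor (q : ℕ) (hodd : Odd q) (hq : 1 < q) (d : ℕ) (hd : 0 < d) (lam : Multiset ℕ) :
    hFactor lam ((q : ℚ) ^ d) ≠ 0 ∧
    -(padicValRat 2 (hookProd lam : ℚ)) -
      ((lam.sum * d : ℕ) * (padicValNat 2 (q - 1) : ℤ)
        + ((padicValNat 2 (q + 1) : ℤ) - 1) * (lam.sum * d / 2 : ℕ))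
      ≤ padicValRat 2 (hFactor lam ((q : ℚ) ^ d)) := by
  have hne : ∀ c ∈ cellsOf lam, ((q : ℚ) ^ d) ^ hookLen lam c - 1 ≠ 0 := by
    intro c hc
    rw [← pow_mul]
    exact pow_sub_ne q hq _ (Nat.mul_pos hd (hookLen_pos lam c hc))
  have hprod := Finset.prod_ne_zero_iff.2 hne
  have hq0 : (q : ℚ) ≠ 0 := by positivity
  have hx : ((q : ℚ) ^ d) ^ alphaStat lam ≠ 0 := pow_ne_zero _ (pow_ne_zero _ hq0)
  unfold hFactor
  refine ⟨div_ne_zero hx hprod, ?_⟩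
  have h2 : ¬ 2 ∣ q := by rw [← even_iff_two_dvd]; exact Nat.not_even_iff_odd.2 hodd
  have hxv : padicValRat 2 (((q : ℚ) ^ d) ^ alphaStat lam) = 0 := by
    rw [← pow_mul, padicValRat.pow, padicValRat.of_nat, padicValNat.eq_zero_of_not_dvd h2]
    simp
  rw [padicValRat.div hx hprod, hxv, val_prod _ _ hne]
  have hterm : ∀ c ∈ cellsOf lam, padicValRat 2 (((q : ℚ) ^ d) ^ hookLen lam c - 1) =
      (padicValNat 2 (q - 1) : ℤ) + padicValRat 2 (d : ℚ) + padicValRat 2 (hookLen lam c : ℚ)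
      + ((padicValNat 2 (q + 1) : ℤ) - 1) * (if Even (d * hookLen lam c) then 1 else 0) := by
    intro c hc
    have hp := hookLen_pos lam c hc
    rw [← pow_mul, val_pow q hodd hq _ (Nat.mul_pos hd hp), Nat.cast_mul, padicValRat.mul
      (by positivity) (by positivity)]
    ring
  have hhp : padicValRat 2 (hookProd lam : ℚ) =
      ∑ c ∈ cellsOf lam, padicValRat 2 (hookLen lam c : ℚ) := by
    unfold hookProd
    rw [Nat.cast_prod, val_prod]
    intro c hc
    have hp := hookLen_pos lam c hc
    positivity
  rw [Finset.sum_congr rfl hterm, Finset.sum_add_distrib, Finset.sum_add_distrib, ← hhp,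
    ← Finset.mul_sum, Finset.sum_const, card_cells, nsmul_eq_mul, padicValRat.of_nat (n := d)]
  have hE := even_hooks lam
  have ha : 1 ≤ padicValNat 2 (q - 1) :=
    one_le_padicValNat_of_dvd (by omega) (by omega)
  have he : 1 ≤ padicValNat 2 (q + 1) :=
    one_le_padicValNat_of_dvd (by omega) (by omega)
  obtain ⟨e, he⟩ := Nat.exists_eq_add_of_le he
  rw [he]
  generalize padicValNat 2 (q - 1) = a at *
  have hcard := card_cells lam
  generalize lam.sum = m at *
  rcases Nat.even_or_odd d with hde | hdo
  · have : ∀ c ∈ cellsOf lam, (if Even (d * hookLen lam c) then (1 : ℤ) else 0) = 1 := by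
      intro c _
      rw [if_pos (hde.mul_right _)]
    rw [Finset.sum_congr rfl this]
    have hv : padicValNat 2 d < d := by
      exact (Nat.lt_two_pow_self.trans_le (Nat.le_of_dvd hd pow_padicValNat_dvd))
    rw [Finset.sum_const, hcard, nsmul_eq_mul]
    obtain ⟨t, rfl⟩ := hde
    have hh : m * (t + t) / 2 = m * t := by
      rw [← two_mul, mul_left_comm, Nat.mul_div_cancel_left _ (by norm_num)]
    rw [hh]
    generalize padicValNat 2 (t + t) = v at *
    have k1 : a + v + e ≤ (t + t) * a + e * t := by
      have : e * 1 ≤ e * t := Nat.mul_le_mul_left e (by omega)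
      obtain ⟨w, rfl⟩ := Nat.exists_eq_add_of_le ha
      obtain ⟨u, hu⟩ := Nat.exists_eq_add_of_lt hv
      rw [hu]
      nlinarith [Nat.zero_le (v * w), Nat.zero_le (u * w)]
    have k2 := Nat.mul_le_mul_left m k1
    zify at k2
    push_cast
    linarith
  · have hv : padicValNat 2 d = 0 := by
      apply padicValNat.eq_zero_of_not_dvd
      rw [← even_iff_two_dvd]; exact Nat.not_even_iff_odd.2 hdo
    have : ∀ c ∈ cellsOf lam, (if Even (d * hookLen lam c) then (1 : ℤ) else 0)
        = ((if Even (hookLen lam c) then 1 else 0 : ℕ) : ℤ) := by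
      intro c _
      simp [Nat.even_mul, Nat.not_even_iff_odd.2 hdo]
    rw [Finset.sum_congr rfl this, ← Nat.cast_sum]
    generalize ∑ c ∈ cellsOf lam, (if Even (hookLen lam c) then 1 else 0) = E at *
    have h1 : m ≤ m * d := Nat.le_mul_of_pos_right m hd
    have h3 : E ≤ m * d / 2 := by omega
    have h4 := Nat.mul_le_mul_left e h3
    have h5 := Nat.mul_le_mul_right a h1
    rw [hv]
    zify at h4 h5
    push_cast at *
    linarith

theorem two_adic_valuation_of_dMu
    (q : ℕ) (hq : IsPrimePow q) (hodd : Odd q)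
    (F : Type*) [Field F] [Fintype F] (hFq : Fintype.card F = q)
    (n : ℕ) (hn : 0 < n) (μ : Polynomial F →₀ Multiset ℕ) (hμ : IsXn F n μ) :
    padicValRat 2
          ((Nat.factorial n : ℚ) / ∏ f ∈ μ.support, (Nat.factorial (μ f).sum : ℚ)) +
        ∑ f ∈ μ.support, padicValRat 2 (fDeg (μ f)) ≤
      padicValRat 2 (dMu q n μ) := by
  have hq1 : 1 < q := hq.one_lt
  obtain ⟨h1, -, h3⟩ := hμ
  have hd : ∀ f ∈ μ.support, 0 < f.natDegree := fun f hf => (h1 f hf).2.1.natDegree_pos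
  have hH := fun f hf => val_hFactor q hodd hq1 f.natDegree (hd f hf) (μ f)
  have hfac : ∀ m : ℕ, (m.factorial : ℚ) ≠ 0 := fun m => by exact_mod_cast m.factorial_ne_zero
  have hhp : ∀ lam, (hookProd lam : ℚ) ≠ 0 := by
    intro lam
    have : hookProd lam ≠ 0 := Finset.prod_ne_zero_iff.2 fun c hc => (hookLen_pos lam c hc).ne'
    exact_mod_cast this
  have hpsi : psiPoly n (q : ℚ) ≠ 0 :=
    Finset.prod_ne_zero_iff.2 fun i hi => pow_sub_ne q hq1 i (Finset.mem_Icc.1 hi).1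
  unfold dMu
  rw [padicValRat.div (hfac n) (Finset.prod_ne_zero_iff.2 fun f _ => hfac _),
    val_prod _ _ (fun f _ => hfac _), padicValRat.mul hpsi
      (Finset.prod_ne_zero_iff.2 fun f hf => (hH f hf).1), val_prod _ _ (fun f hf => (hH f hf).1),
    val_psi q hodd hq1]
  have hf : ∀ f ∈ μ.support, padicValRat 2 (fDeg (μ f)) =
      padicValRat 2 ((μ f).sum.factorial : ℚ) - padicValRat 2 (hookProd (μ f) : ℚ) := by
    intro f _
    exact padicValRat.div (hfac _) (hhp _)
  rw [Finset.sum_congr rfl hf, Finset.sum_sub_distrib]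
  have hs := Finset.sum_le_sum fun f hf => (hH f hf).2
  rw [Finset.sum_sub_distrib, Finset.sum_add_distrib, ← Finset.sum_mul, ← Finset.mul_sum,
    Finset.sum_neg_distrib, ← Nat.cast_sum, ← Nat.cast_sum] at hs
  have h3' : ∑ f ∈ μ.support, (μ f).sum * f.natDegree = n := h3
  rw [h3'] at hs
  have hhalf : ∑ f ∈ μ.support, (μ f).sum * f.natDegree / 2 ≤ n / 2 := by
    rw [Nat.le_div_iff_mul_le (by norm_num), ← h3', Finset.sum_mul]
    exact Finset.sum_le_sum fun f _ => Nat.div_mul_le_self _ _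
  have he : 1 ≤ padicValNat 2 (q + 1) := by
    have : q % 2 = 1 := Nat.odd_iff.1 hodd
    exact one_le_padicValNat_of_dvd (by omega) (by omega)
  have h6 : ((padicValNat 2 (q + 1) : ℤ) - 1) *
      ((∑ f ∈ μ.support, (μ f).sum * f.natDegree / 2 : ℕ) : ℤ) ≤
      ((padicValNat 2 (q + 1) : ℤ) - 1) * ((n / 2 : ℕ) : ℤ) := by
    apply mul_le_mul_of_nonneg_left
    · exact_mod_cast hhalf
    · have : (1 : ℤ) ≤ padicValNat 2 (q + 1) := by exact_mod_cast he
      linarith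
  linarith
end
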